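/- arXiv:2211.16129 — 7 statements merged into one kernel-verified Lean document; each statement's English description precedes it below -/
import Mathlib

section
/- Let V₁₀ be a 10-dimensional complex vector space, σ an alternating trilinear form on V₁₀, and let V₃ ⊆ V₇ ⊆ V₁₀ be subspaces of dimensions 3 and 7 respectively such that σ(V₃, V₇, V₇) = 0. Then there exists a 4-dimensional subspace U₄ with V₃ ⊆ U₄ ⊆ V₇ and σ(U₄, V₇, V₇) = 0. -/
/-- If `σ` is an alternating trilinear form on a 10-dimensional complex vector
space and `V₃ ⊆ V₇` are subspaces of dimensions 3 and 7 with `σ(V₃, V₇, V₇) = 0`,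
then there is a 4-dimensional subspace `U₄` with `V₃ ⊆ U₄ ⊆ V₇` and
`σ(U₄, V₇, V₇) = 0`. -/
theorem stmt_1 (V : Type*) [AddCommGroup V] [Module ℂ V] [FiniteDimensional ℂ V]
    (hV : Module.finrank ℂ V = 10)
    (σ : V →ₗ[ℂ] V →ₗ[ℂ] V →ₗ[ℂ] ℂ)
    (halt : ∀ x y z : V, (x = y ∨ y = z ∨ x = z) → σ x y z = 0)
    (V₃ V₇ : Submodule ℂ V) (hV₃ : Module.finrank ℂ V₃ = 3)
    (hV₇ : Module.finrank ℂ V₇ = 7) (h37 : V₃ ≤ V₇)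
    (hvan : ∀ a ∈ V₃, ∀ b ∈ V₇, ∀ c ∈ V₇, σ a b c = 0) :
    ∃ U₄ : Submodule ℂ V, Module.finrank ℂ U₄ = 4 ∧ V₃ ≤ U₄ ∧ U₄ ≤ V₇ ∧
      ∀ a ∈ U₄, ∀ b ∈ V₇, ∀ c ∈ V₇, σ a b c = 0 := by
  have s12 : ∀ x y z, σ x y z = - σ y x z := by
    intro x y z
    have h := halt (x + y) (x + y) z (Or.inl rfl)
    have h1 := halt x x z (Or.inl rfl)
    have h2 := halt y y z (Or.inl rfl)
    simp only [map_add, LinearMap.add_apply] at h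
    linear_combination h - h1 - h2
  have s23 : ∀ x y z, σ x y z = - σ x z y := by
    intro x y z
    have h := halt x (y + z) (y + z) (Or.inr (Or.inl rfl))
    have h1 := halt x y y (Or.inr (Or.inl rfl))
    have h2 := halt x z z (Or.inr (Or.inl rfl))
    simp only [map_add, LinearMap.add_apply] at h
    linear_combination h - h1 - h2
  obtain ⟨W', hW'⟩ := Submodule.exists_isCompl V₃
  obtain ⟨W, hW⟩ : ∃ W, W = W' ⊓ V₇ := ⟨_, rfl⟩
  have hWle : W ≤ V₇ := hW ▸ inf_le_right
  have hsup : V₃ ⊔ W = V₇ := by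
    rw [hW, ← sup_inf_assoc_of_le W' h37, hW'.sup_eq_top, top_inf_eq]
  have hinf : V₃ ⊓ W = ⊥ := by
    rw [hW, ← inf_assoc, hW'.inf_eq_bot, bot_inf_eq]
  have hWr : Module.finrank ℂ W = 4 := by
    have h := Submodule.finrank_sup_add_finrank_inf_eq V₃ W
    rw [hsup, hinf, finrank_bot] at h
    omega
  obtain ⟨v, hvW, hv0, hv⟩ : ∃ v ∈ W, v ≠ 0 ∧ ∀ b ∈ W, ∀ c ∈ W, σ v b c = 0 := by
    let B := Module.finBasisOfFinrankEq ℂ W hWr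
    obtain ⟨e, he⟩ : ∃ e : Fin 4 → V, e = fun i => (B i : V) := ⟨_, rfl⟩
    have hli : LinearIndependent ℂ e := by
      rw [he]
      exact B.linearIndependent.map' W.subtype (Submodule.ker_subtype W)
    have heW : ∀ i, e i ∈ W := by
      intro i
      rw [he]
      exact (B i).2
    have hrep : ∀ b ∈ W, ∃ β : Fin 4 → ℂ, b = ∑ i, β i • e i := by
      intro b hb
      refine ⟨B.repr ⟨b, hb⟩, ?_⟩
      have h := congrArg W.subtype (B.sum_repr ⟨b, hb⟩)
      rw [map_sum] at h
      rw [he]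
      simpa using h.symm
    suffices h : ∃ α : Fin 4 → ℂ, α ≠ 0 ∧
        ∀ i j, σ (∑ k, α k • e k) (e i) (e j) = 0 by
      obtain ⟨α, hα, h⟩ := h
      refine ⟨∑ k, α k • e k, Submodule.sum_mem _ fun i _ => W.smul_mem _ (heW i), ?_, ?_⟩
      · intro h0
        exact hα (funext (Fintype.linearIndependent_iff.1 hli α h0))
      · intro b hb c hc
        obtain ⟨β, rfl⟩ := hrep b hb
        obtain ⟨γ, rfl⟩ := hrep c hc
        generalize (∑ k, α k • e k) = v at h
        simp [map_sum, LinearMap.sum_apply, h]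
    have d1 : ∀ x z, σ x x z = 0 := fun x z => halt x x z (Or.inl rfl)
    have d2 : ∀ x z, σ x z z = 0 := fun x z => halt x z z (Or.inr (Or.inl rfl))
    have d3 : ∀ x z, σ x z x = 0 := fun x z => halt x z x (Or.inr (Or.inr rfl))
    have key : ∀ α : Fin 4 → ℂ,
        α 0 * σ (e 0) (e 1) (e 2) + α 3 * σ (e 1) (e 2) (e 3) = 0 →
        α 0 * σ (e 0) (e 1) (e 3) - α 2 * σ (e 1) (e 2) (e 3) = 0 →
        α 0 * σ (e 0) (e 2) (e 3) + α 1 * σ (e 1) (e 2) (e 3) = 0 →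
        α 1 * σ (e 0) (e 1) (e 2) - α 3 * σ (e 0) (e 2) (e 3) = 0 →
        α 1 * σ (e 0) (e 1) (e 3) + α 2 * σ (e 0) (e 2) (e 3) = 0 →
        α 2 * σ (e 0) (e 1) (e 2) + α 3 * σ (e 0) (e 1) (e 3) = 0 →
        ∀ i j, σ (∑ k, α k • e k) (e i) (e j) = 0 := by
      intro α h1 h2 h3 h4 h5 h6
      have hlt : ∀ i j, i < j → σ (∑ k, α k • e k) (e i) (e j) = 0 := by
        intro i j hij
        simp only [Fin.sum_univ_four, map_add, map_smul, LinearMap.add_apply,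
          LinearMap.smul_apply, smul_eq_mul]
        have r1 := s12 (e 1) (e 0) (e 2)
        have r2 := s12 (e 1) (e 0) (e 3)
        have r3 := s12 (e 2) (e 0) (e 3)
        have r4 := s12 (e 2) (e 1) (e 3)
        have r5 := s12 (e 2) (e 0) (e 1)
        have r6 := s23 (e 0) (e 2) (e 1)
        have r7 := s12 (e 3) (e 0) (e 1)
        have r8 := s23 (e 0) (e 3) (e 1)
        have r9 := s12 (e 3) (e 0) (e 2)
        have r10 := s23 (e 0) (e 3) (e 2)
        have r11 := s12 (e 3) (e 1) (e 2)
        have r12 := s23 (e 1) (e 3) (e 2)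
        fin_cases i <;> fin_cases j <;> first
          | (exfalso; revert hij; decide)
          | (simp only [Fin.zero_eta, Fin.mk_one, Fin.reduceFinMk, d1, d2, d3, r5, r6, r7, r8,
              r9, r10, r11, r12, r1, r2, r3, r4]
             first
              | linear_combination h1
              | linear_combination h2
              | linear_combination h3
              | linear_combination h4
              | linear_combination h5
              | linear_combination h6
              | linear_combination -h1
              | linear_combination -h2
              | linear_combination -h3
              | linear_combination -h4
              | linear_combination -h5
              | linear_combination -h6)
      intro i j
      rcases lt_trichotomy i j with h | h | h
      · exact hlt i j h
      · rw [h]; exact d2 _ _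
      · rw [s23, hlt j i h, neg_zero]
    by_cases hz : (![σ (e 1) (e 2) (e 3), -σ (e 0) (e 2) (e 3), σ (e 0) (e 1) (e 3),
        -σ (e 0) (e 1) (e 2)] : Fin 4 → ℂ) = 0
    · have z0 := congrFun hz 0
      have z1 := congrFun hz 1
      have z2 := congrFun hz 2
      have z3 := congrFun hz 3
      simp at z0 z1 z2 z3
      refine ⟨fun _ => 1, fun h => one_ne_zero (congrFun h 0), key _ ?_ ?_ ?_ ?_ ?_ ?_⟩ <;>
        simp [z0, z1, z2, z3]
    · refine ⟨_, hz, key _ ?_ ?_ ?_ ?_ ?_ ?_⟩ <;> simp <;> ring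
  have hvV7 : v ∈ V₇ := hWle hvW
  have hvall : ∀ b ∈ V₇, ∀ c ∈ V₇, σ v b c = 0 := by
    intro b hb c hc
    have hb' := hb
    have hc' := hc
    rw [← hsup] at hb' hc'
    obtain ⟨b3, hb3, bw, hbw, rfl⟩ := Submodule.mem_sup.1 hb'
    obtain ⟨c3, hc3, cw, hcw, rfl⟩ := Submodule.mem_sup.1 hc'
    have e1 : σ v b3 (c3 + cw) = 0 := by rw [s12, hvan b3 hb3 v hvV7 _ hc, neg_zero]
    have e2 : σ v bw c3 = 0 := by
      rw [s23, s12, hvan c3 hc3 v hvV7 bw (hWle hbw), neg_zero, neg_zero]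
    rw [map_add (σ v), LinearMap.add_apply, e1, map_add, e2, hv bw hbw cw hcw]
    simp
  refine ⟨V₃ ⊔ Submodule.span ℂ {v}, ?_, le_sup_left, ?_, ?_⟩
  · have h := Submodule.finrank_sup_add_finrank_inf_eq V₃ (Submodule.span ℂ {v})
    have hb : V₃ ⊓ Submodule.span ℂ {v} = ⊥ := by
      rw [eq_bot_iff, ← hinf]
      exact inf_le_inf_left _ ((Submodule.span_singleton_le_iff_mem _ _).2 hvW)
    rw [hb, finrank_bot, finrank_span_singleton hv0] at h
    omega
  · exact sup_le h37 ((Submodule.span_singleton_le_iff_mem _ _).2 hvV7)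
  · intro a ha b hb c hc
    obtain ⟨a3, ha3, w, hw, rfl⟩ := Submodule.mem_sup.1 ha
    obtain ⟨t, rfl⟩ := Submodule.mem_span_singleton.1 hw
    simp [hvan a3 ha3 b hb c hc, hvall b hb c hc]
end

section
/- Let V₁₀ be a 10-dimensional complex vector space, σ an alternating trilinear form on V₁₀, V₃ ⊆ V₄ ⊆ V₁₀ subspaces of dimensions 3 and 4, and let l₀ ∈ V₄ \ V₃. Assume that σ(l₀, x, y) = 0 for all x, y ∈ V₄, and that the linear map V₃ → V₁₀* sending v to σ(l₀, v, ·) is injective. Let V₇ be a 7-dimensional subspace with V₄ ⊆ V₇ ⊆ V₁₀ and σ(l₀, x, w) = 0 for all x ∈ V₄, w ∈ V₇. Then the rank of the alternating bilinear form σ(l₀, ·, ·) on V₁₀ is at most 6 if and only if σ(l₀, y, z) = 0 for all y, z ∈ V₇. -/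
/-- In the setting of the proof of Theorem 2.1: with `V₃ ⊆ V₄ ⊆ V₇ ⊆ V₁₀` as
constructed there, the rank of the alternating bilinear form `σ(l₀, ·, ·)` is at
most 6 if and only if `V₇` is isotropic for `σ(l₀, ·, ·)`. -/
theorem stmt_4 (V : Type*) [AddCommGroup V] [Module ℂ V] [FiniteDimensional ℂ V]
    (hV : Module.finrank ℂ V = 10)
    (σ : V →ₗ[ℂ] V →ₗ[ℂ] V →ₗ[ℂ] ℂ)
    (halt : ∀ x y z : V, (x = y ∨ y = z ∨ x = z) → σ x y z = 0)
    (V₃ V₄ V₇ : Submodule ℂ V) (hV₃ : Module.finrank ℂ V₃ = 3)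
    (hV₄ : Module.finrank ℂ V₄ = 4) (h34 : V₃ ≤ V₄)
    (l₀ : V) (hl₀ : l₀ ∈ V₄) (hl₀' : l₀ ∉ V₃)
    (hvan : ∀ x ∈ V₄, ∀ y ∈ V₄, σ l₀ x y = 0)
    (hinj : Function.Injective ((σ l₀).domRestrict V₃))
    (hV₇ : Module.finrank ℂ V₇ = 7) (h47 : V₄ ≤ V₇)
    (hvan7 : ∀ x ∈ V₄, ∀ w ∈ V₇, σ l₀ x w = 0) :
    Module.finrank ℂ (LinearMap.range (σ l₀)) ≤ 6 ↔
      ∀ y ∈ V₇, ∀ z ∈ V₇, σ l₀ y z = 0 := by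
  have hskew : ∀ y z : V, σ l₀ y z = - σ l₀ z y := by
    intro y z
    have h := halt l₀ (y + z) (y + z) (Or.inr (Or.inl rfl))
    have h1 := halt l₀ y y (Or.inr (Or.inl rfl))
    have h2 := halt l₀ z z (Or.inr (Or.inl rfl))
    simp only [map_add, LinearMap.add_apply, h1, h2] at h
    linear_combination h
  have hmap : V₃.map (σ l₀) = V₇.dualAnnihilator := by
    apply Submodule.eq_of_le_of_finrank_eq
    · rintro _ ⟨x, hx, rfl⟩
      rw [Submodule.mem_dualAnnihilator]
      exact fun w hw => hvan7 x (h34 hx) w hw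
    · have h1 : Module.finrank ℂ (V₃.map (σ l₀)) = 3 := by
        rw [← LinearMap.range_domRestrict, LinearMap.finrank_range_of_inj hinj, hV₃]
      have h2 : Module.finrank ℂ V₇ + Module.finrank ℂ V₇.dualAnnihilator = 10 :=
        (Subspace.finrank_add_finrank_dualAnnihilator_eq V₇).trans hV
      rw [hV₇] at h2
      have h3 : Module.finrank ℂ V₇.dualAnnihilator = 3 := by omega
      exact h1.trans h3.symm
  have hrn := LinearMap.finrank_range_add_finrank_ker (σ l₀)
  have hdisj : V₃ ⊓ LinearMap.ker (σ l₀) = ⊥ := by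
    rw [eq_bot_iff]
    rintro x ⟨hx, hk⟩
    have : (⟨x, hx⟩ : V₃) = 0 := by
      apply hinj
      simpa using hk
    simpa using congrArg Subtype.val this
  have hsum := Submodule.finrank_sup_add_finrank_inf_eq V₃ (LinearMap.ker (σ l₀))
  rw [hdisj, finrank_bot] at hsum
  constructor
  · intro hr
    have hK : LinearMap.ker (σ l₀) ≤ V₇ := by
      intro k hk
      rw [← Subspace.dualAnnihilator_dualCoannihilator_eq (W := V₇), ← hmap,
        Submodule.mem_dualCoannihilator]
      rintro _ ⟨x, hx, rfl⟩
      rw [hskew, LinearMap.mem_ker.mp hk]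
      simp
    have heq : V₃ ⊔ LinearMap.ker (σ l₀) = V₇ := by
      apply Submodule.eq_of_le_of_finrank_le (sup_le (h34.trans h47) hK)
      omega
    intro y hy z hz
    rw [← heq] at hy
    obtain ⟨a, ha, k, hk, rfl⟩ := Submodule.mem_sup.mp hy
    rw [map_add, LinearMap.mem_ker.mp hk, add_zero]
    exact hvan7 a (h34 ha) z hz
  · intro h
    have hle : V₇ ≤ V₃ ⊔ LinearMap.ker (σ l₀) := by
      intro y hy
      have : σ l₀ y ∈ V₃.map (σ l₀) := by
        rw [hmap, Submodule.mem_dualAnnihilator]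
        exact h y hy
      obtain ⟨a, ha, hay⟩ := this
      refine Submodule.mem_sup.mpr ⟨a, ha, y - a, ?_, by abel⟩
      rw [LinearMap.mem_ker, map_sub, hay, sub_self]
    have := Submodule.finrank_mono hle
    omega
end

section
/- Let V₁₀ be a 10-dimensional complex vector space, σ an alternating trilinear form on V₁₀, and V₂ ⊆ V₄ ⊆ V₇ ⊆ V₁₀ subspaces of dimensions 2, 4 and 7 such that σ(V₂, V₇, V₇) = 0 and σ(V₄, V₄, V₇) = 0. Then there exists a 6-dimensional subspace U₆ with V₄ ⊆ U₆ ⊆ V₇ such that σ(x, y, z) = 0 for all x, y, z ∈ U₆. -/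
theorem aux_compl {V : Type*} [AddCommGroup V] [Module ℂ V] [FiniteDimensional ℂ V]
    (A B : Submodule ℂ V) (h : A ≤ B) :
    ∃ W : Submodule ℂ V, W ≤ B ∧ A ⊔ W = B ∧ A ⊓ W = ⊥ ∧
      Module.finrank ℂ A + Module.finrank ℂ W = Module.finrank ℂ B := by
  obtain ⟨C, hC⟩ := A.exists_isCompl
  have h1 : A ⊔ C ⊓ B = B := by
    rw [← sup_inf_assoc_of_le C h, hC.sup_eq_top, top_inf_eq]
  have h2 : A ⊓ (C ⊓ B) = ⊥ := by
    rw [← inf_assoc, hC.inf_eq_bot, bot_inf_eq]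
  refine ⟨C ⊓ B, inf_le_right, h1, h2, ?_⟩
  have := Submodule.finrank_sup_add_finrank_inf_eq A (C ⊓ B)
  rw [h1, h2, finrank_bot] at this
  omega

theorem aux_repr {V : Type*} [AddCommGroup V] [Module ℂ V] (W : Submodule ℂ V) {n : ℕ}
    (b : Module.Basis (Fin n) ℂ W) (w : W) : (w : V) = ∑ i, b.repr w i • (b i : V) := by
  have h := congrArg W.subtype (b.sum_repr w)
  rw [map_sum] at h
  exact h.symm

/-- In the proof of Theorem 2.1: if `V₂ ⊆ V₄ ⊆ V₇` have dimensions 2, 4, 7 with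
`σ(V₂, V₇, V₇) = 0` and `σ(V₄, V₄, V₇) = 0`, then there is a 6-dimensional `U₆`
with `V₄ ⊆ U₆ ⊆ V₇` on which `σ` vanishes identically. -/
theorem stmt_6 (V : Type*) [AddCommGroup V] [Module ℂ V] [FiniteDimensional ℂ V]
    (hV : Module.finrank ℂ V = 10)
    (σ : V →ₗ[ℂ] V →ₗ[ℂ] V →ₗ[ℂ] ℂ)
    (halt : ∀ x y z : V, (x = y ∨ y = z ∨ x = z) → σ x y z = 0)
    (V₂ V₄ V₇ : Submodule ℂ V)
    (hV₂ : Module.finrank ℂ V₂ = 2) (hV₄ : Module.finrank ℂ V₄ = 4)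
    (hV₇ : Module.finrank ℂ V₇ = 7) (h24 : V₂ ≤ V₄) (h47 : V₄ ≤ V₇)
    (hvan2 : ∀ a ∈ V₂, ∀ b ∈ V₇, ∀ c ∈ V₇, σ a b c = 0)
    (hvan4 : ∀ a ∈ V₄, ∀ b ∈ V₄, ∀ c ∈ V₇, σ a b c = 0) :
    ∃ U₆ : Submodule ℂ V, Module.finrank ℂ U₆ = 6 ∧ V₄ ≤ U₆ ∧ U₆ ≤ V₇ ∧
      ∀ x ∈ U₆, ∀ y ∈ U₆, ∀ z ∈ U₆, σ x y z = 0 := by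
  have sw1 : ∀ x y z, σ x y z = - σ y x z := by
    intro x y z
    have h := halt (x + y) (x + y) z (Or.inl rfl)
    have h1 := halt x x z (Or.inl rfl)
    have h2 := halt y y z (Or.inl rfl)
    simp only [map_add, LinearMap.add_apply] at h
    linear_combination h - h1 - h2
  have sw2 : ∀ x y z, σ x y z = - σ x z y := by
    intro x y z
    have h := halt x (y + z) (y + z) (Or.inr (Or.inl rfl))
    have h1 := halt x y y (Or.inr (Or.inl rfl))
    have h2 := halt x z z (Or.inr (Or.inl rfl))
    simp only [map_add, LinearMap.add_apply] at h
    linear_combination h - h1 - h2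
  obtain ⟨W, hW7, hsW, hiW, hdW⟩ := aux_compl V₄ V₇ h47
  obtain ⟨F, hF4, hsF, hiF, hdF⟩ := aux_compl V₂ V₄ h24
  have hW3 : Module.finrank ℂ W = 3 := by omega
  have hF2 : Module.finrank ℂ F = 2 := by omega
  let e := Module.finBasisOfFinrankEq ℂ W hW3
  let f := Module.finBasisOfFinrankEq ℂ F hF2
  let k : V → Fin 3 → ℂ := fun a => ![σ a (e 1) (e 2), σ a (e 2) (e 0), σ a (e 0) (e 1)]
  obtain ⟨n, hn0, hn⟩ := (Matrix.exists_mulVec_eq_zero_iff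
    (M := Matrix.of ![k (f 0), k (f 1), 0])).2 (by simp [Matrix.det_fin_three])
  have hk0 : k (f 0) ⬝ᵥ n = 0 := congrFun hn 0
  have hk1 : k (f 1) ⬝ᵥ n = 0 := congrFun hn 1
  let φ : W →ₗ[ℂ] ℂ := e.constr ℂ n
  have hφe : ∀ i, φ (e i) = n i := fun i => e.constr_basis ℂ n i
  have hφ : ∀ w : W, φ w = e.repr w 0 * n 0 + e.repr w 1 * n 1 + e.repr w 2 * n 2 := by
    intro w
    have h := congrArg φ (e.sum_repr w)
    rw [Fin.sum_univ_three, map_add, map_add, map_smul, map_smul, map_smul, hφe, hφe, hφe] at h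
    exact h.symm
  have hφ0 : φ ≠ 0 := by
    intro h
    apply hn0
    funext i
    rw [← hφe i, h]; rfl
  have hker : Module.finrank ℂ (LinearMap.ker φ) = 2 := by
    have h1 := LinearMap.finrank_range_add_finrank_ker φ
    have h2 : LinearMap.range φ = ⊤ := LinearMap.range_eq_top.2 (LinearMap.surjective hφ0)
    rw [h2, finrank_top, Module.finrank_self] at h1
    omega
  -- the key vanishing
  have key : ∀ a : V, k a ⬝ᵥ n = 0 → ∀ u v : W, φ u = 0 → φ v = 0 → σ a u v = 0 := by
    intro a ha u v hu hv
    have hdet := (Matrix.exists_mulVec_eq_zero_iff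
      (M := Matrix.of ![k a, e.repr u, e.repr v])).1 ⟨n, hn0, by
        rw [hφ] at hu hv
        funext i
        fin_cases i
        · exact ha
        · simpa [Matrix.mulVec, dotProduct, Fin.sum_univ_three] using hu
        · simpa [Matrix.mulVec, dotProduct, Fin.sum_univ_three] using hv⟩
    rw [Matrix.det_fin_three] at hdet
    simp [k] at hdet
    rw [aux_repr W e u, aux_repr W e v]
    simp only [Fin.sum_univ_three, map_add, map_smul, LinearMap.add_apply, LinearMap.smul_apply,
      smul_eq_mul]
    rw [sw2 a (e 1) (e 0), sw2 a (e 2) (e 1), sw2 a (e 0) (e 2),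
      halt a (e 0) (e 0) (by simp), halt a (e 1) (e 1) (by simp), halt a (e 2) (e 2) (by simp)]
    linear_combination hdet
  let K : Submodule ℂ V := (LinearMap.ker φ).map W.subtype
  have hK2 : Module.finrank ℂ K = 2 := by
    rw [← hker]
    exact Submodule.finrank_map_subtype_eq W _
  have hKW : K ≤ W := Submodule.map_subtype_le W _
  have key2 : ∀ a ∈ V₄, ∀ u ∈ K, ∀ v ∈ K, σ a u v = 0 := by
    intro a ha u hu v hv
    obtain ⟨u, hu, rfl⟩ := hu
    obtain ⟨v, hv, rfl⟩ := hv
    rw [← hsF] at ha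
    obtain ⟨s, hs, t, ht, rfl⟩ := Submodule.mem_sup.1 ha
    have h0 := hvan2 s hs u (hW7 u.2) v (hW7 v.2)
    have ht' := aux_repr F f ⟨t, ht⟩
    simp only [Fin.sum_univ_two] at ht'
    have h1 := key _ hk0 u v hu hv
    have h2 := key _ hk1 u v hu hv
    rw [ht']
    simp [h0, h1, h2]
  have key3 : ∀ u ∈ K, ∀ v ∈ K, ∀ w ∈ K, σ u v w = 0 := by
    intro u hu v hv w hw
    let g := Module.finBasisOfFinrankEq ℂ K hK2
    have h1 := aux_repr K g ⟨u, hu⟩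
    have h2 := aux_repr K g ⟨v, hv⟩
    have h3 := aux_repr K g ⟨w, hw⟩
    simp only [Fin.sum_univ_two] at h1 h2 h3
    rw [h1, h2, h3]
    simp [halt]
  have hint : V₄ ⊓ K = ⊥ := le_bot_iff.1 (hiW ▸ inf_le_inf_left V₄ hKW)
  refine ⟨V₄ ⊔ K, ?_, le_sup_left, sup_le h47 (hKW.trans hW7), ?_⟩
  · have := Submodule.finrank_sup_add_finrank_inf_eq V₄ K
    rw [hint, finrank_bot] at this
    omega
  · intro x hx y hy z hz
    obtain ⟨a, ha, u, hu, rfl⟩ := Submodule.mem_sup.1 hx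
    obtain ⟨b, hb, v, hv, rfl⟩ := Submodule.mem_sup.1 hy
    obtain ⟨c, hc, w, hw, rfl⟩ := Submodule.mem_sup.1 hz
    have hK7 : K ≤ V₇ := hKW.trans hW7
    simp only [map_add, LinearMap.add_apply]
    rw [sw2 a v c, sw1 u b c, sw2 b u c, sw1 u b w, sw2 u v c, sw1 u c v,
      hvan4 a ha b hb c (h47 hc), hvan4 a ha b hb w (hK7 hw), hvan4 a ha c hc v (hK7 hv),
      hvan4 b hb c hc u (hK7 hu), key2 a ha v hv w hw, key2 b hb u hu w hw,
      key2 c hc u hu v hv, key3 u hu v hv w hw]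
    simp
end

section
/- Let V₁₀ be a 10-dimensional complex vector space, σ an alternating trilinear form on V₁₀, v₁ a nonzero vector, and V₆ ⊆ V₁₀ a 6-dimensional subspace with v₁ ∈ V₆ and σ(v₁, y, z) = 0 for all y ∈ V₆, z ∈ V₁₀. Then there exists a symmetric trilinear form T : V₆ × V₆ × V₆ → ℂ such that for every v ∈ V₆ with v ∉ ℂv₁, one has T(v, v, v) = 0 if and only if the rank of the alternating bilinear form σ(v, ·, ·) on V₁₀ is at most 6. (Equivalently, the locus X₁^σ ∩ P(V₆) is cut out, away from [v₁], by a single homogeneous cubic equation on V₆.) -/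
open Matrix

theorem skew_inv {K : Type*} [Field K] {m : Type*} [Fintype m] [DecidableEq m]
    (A : Matrix m m K) (h : Aᵀ = -A) : (A⁻¹)ᵀ = -A⁻¹ := by
  rw [Matrix.transpose_nonsing_inv, h]
  by_cases hd : IsUnit A.det
  · apply Matrix.inv_eq_left_inv
    rw [neg_mul_neg, Matrix.nonsing_inv_mul _ hd]
  · rw [Matrix.nonsing_inv_apply_not_isUnit _ hd, Matrix.nonsing_inv_apply_not_isUnit, neg_zero]
    rw [Matrix.det_neg]
    intro h2
    exact hd (isUnit_of_mul_isUnit_right h2)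

theorem skew_det_sq {K : Type*} [Field K] [CharZero K] (n : ℕ) :
    ∀ {ι : Type} [Fintype ι] [DecidableEq ι] (A : Matrix ι ι K), Fintype.card ι = n →
      Aᵀ = -A → IsSquare A.det := by
  induction n using Nat.strong_induction_on with
  | _ n ih =>
  intro ι _ _ A hn hA
  have hA' : ∀ i j, A j i = - A i j := fun i j => by
    have := congrFun (congrFun hA i) j
    simpa using this
  have hdiag : ∀ i, A i i = 0 := fun i => self_eq_neg.mp (hA' i i)
  by_cases hz : A = 0
  · by_cases he : Nonempty ι
    · rw [hz, Matrix.det_zero]; exact IsSquare.zero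
    · rw [not_nonempty_iff] at he
      rw [Matrix.det_isEmpty]; exact IsSquare.one
  · obtain ⟨i, j, hij⟩ : ∃ i j, A i j ≠ 0 := by
      by_contra! h
      exact hz (by ext i j; exact h i j)
    have hne : i ≠ j := by rintro rfl; exact hij (hdiag i)
    let p : ι → Prop := fun x => x = i ∨ x = j
    let e : {x // p x} ⊕ {x // ¬ p x} ≃ ι := Equiv.sumCompl p
    let e2 : Fin 2 ≃ {x // p x} := Equiv.ofBijective
      (fun k => ![⟨i, Or.inl rfl⟩, ⟨j, Or.inr rfl⟩] k) (by
        constructor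
        · intro a b hab
          have hne' := hne.symm
          fin_cases a <;> fin_cases b <;> simp [hne, hne'] at hab ⊢
        · rintro ⟨x, rfl | rfl⟩
          · exact ⟨0, rfl⟩
          · exact ⟨1, rfl⟩)
    set B := A.submatrix e e with hB
    have hBd : B.det = A.det := Matrix.det_submatrix_equiv_self e A
    have h11 : B.toBlocks₁₁.det = A i j * A i j := by
      rw [← Matrix.det_submatrix_equiv_self e2, Matrix.det_fin_two]
      change A i i * A j j - A i j * A j i = _
      rw [hdiag, hA' i j]; ring
    have hu : IsUnit B.toBlocks₁₁.det := by
      rw [h11]; exact isUnit_iff_ne_zero.mpr (mul_ne_zero hij hij)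
    have : Invertible B.toBlocks₁₁ := Matrix.invertibleOfIsUnitDet _ hu
    rw [← hBd, ← Matrix.fromBlocks_toBlocks B, Matrix.det_fromBlocks₁₁, h11]
    refine IsSquare.mul ⟨_, rfl⟩ ?_
    have t11 : B.toBlocks₁₁ᵀ = - B.toBlocks₁₁ := by
      ext a b; simp [B, Matrix.toBlocks₁₁, hA' (e (Sum.inl a))]
    have t12 : B.toBlocks₁₂ᵀ = - B.toBlocks₂₁ := by
      ext a b
      simp only [B, Matrix.toBlocks₁₂, Matrix.toBlocks₂₁, Matrix.transpose_apply, Matrix.of_apply,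
        Matrix.submatrix_apply, Matrix.neg_apply]
      exact hA' _ _
    have t21 : B.toBlocks₂₁ᵀ = - B.toBlocks₁₂ := by
      ext a b
      simp only [B, Matrix.toBlocks₁₂, Matrix.toBlocks₂₁, Matrix.transpose_apply, Matrix.of_apply,
        Matrix.submatrix_apply, Matrix.neg_apply]
      exact hA' _ _
    have t22 : B.toBlocks₂₂ᵀ = - B.toBlocks₂₂ := by
      ext a b
      simp only [B, Matrix.toBlocks₂₂, Matrix.transpose_apply, Matrix.of_apply,
        Matrix.submatrix_apply, Matrix.neg_apply]
      exact hA' _ _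
    refine ih (Fintype.card {x // ¬ p x}) ?_ _ rfl ?_
    · rw [← hn]
      exact Fintype.card_subtype_lt (x := i) (by simp [p])
    · rw [Matrix.invOf_eq_nonsing_inv, Matrix.transpose_sub, Matrix.transpose_mul,
        Matrix.transpose_mul, skew_inv _ t11, t12, t21, t22]
      simp only [Matrix.mul_neg, Matrix.neg_mul, neg_neg, Matrix.mul_assoc]
      abel

theorem skew_det_sq_ring {R : Type*} [CommRing R] [IsDomain R] [IsIntegrallyClosed R] [CharZero R]
    {ι : Type} [Fintype ι] [DecidableEq ι] (A : Matrix ι ι R) (hA : Aᵀ = -A) :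
    ∃ p : R, p ^ 2 = A.det := by
  let K := FractionRing R
  have : CharZero K := charZero_of_injective_algebraMap (IsFractionRing.injective R K)
  obtain ⟨q, hq⟩ := skew_det_sq (K := K) _ (A.map (algebraMap R K)) rfl (by
    rw [← Matrix.transpose_map, hA]; ext; simp)
  have hd : algebraMap R K A.det = q ^ 2 := by
    rw [RingHom.map_det, sq, ← hq]; rfl
  obtain ⟨p, hp⟩ := IsIntegrallyClosed.exists_algebraMap_eq_of_isIntegral_pow (R := R) (x := q)
    (n := 2) (by norm_num) (by rw [← hd]; exact isIntegral_algebraMap)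
  refine ⟨p, IsFractionRing.injective R K ?_⟩
  rw [map_pow, hp, hd]

theorem adj_prop {R : Type*} [CommRing R] {ι : Type*} [Fintype ι] [DecidableEq ι]
    (M : Matrix ι ι R) (v : ι → R) (hv : M *ᵥ v = 0) (i j l : ι) :
    v j * M.adjugate i l = v i * M.adjugate j l := by
  by_cases hij : i = j
  · rw [hij]
  have hc : ∀ a, M.adjugate a l = (M.updateCol a (Pi.single l 1)).det := by
    intro a
    rw [← Matrix.cramer_apply, Matrix.cramer_eq_adjugate_mulVec, Matrix.mulVec_single_one]; rfl
  rw [hc, hc]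
  set b : ι → R := Pi.single l 1
  have h1 := Matrix.det_updateCol_sum (M.updateCol i b) j v
  have h2 : (fun k => ∑ a, v a • (M.updateCol i b) k a) = v i • (b + (-1 : R) • fun k => M k i) := by
    ext k
    have := congrFun hv k
    simp only [Matrix.mulVec, dotProduct, Pi.zero_apply] at this
    rw [← Finset.add_sum_erase _ _ (Finset.mem_univ i)] at this ⊢
    have h3 : ∑ x ∈ Finset.univ.erase i, v x • (M.updateCol i b) k x
       = ∑ x ∈ Finset.univ.erase i, M k x * v x := by
      apply Finset.sum_congr rfl
      intro x hx
      rw [Matrix.updateCol_ne (Finset.ne_of_mem_erase hx), smul_eq_mul, mul_comm]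
    rw [h3]
    simp only [Matrix.updateCol_self, smul_eq_mul, Pi.smul_apply, Pi.add_apply]
    linear_combination this
  rw [h2, Matrix.det_updateCol_smul, Matrix.det_updateCol_add, Matrix.det_updateCol_smul] at h1
  have h4 : ((M.updateCol i b).updateCol j b).det = 0 := by
    apply Matrix.det_zero_of_column_eq hij
    intro k
    simp [hij]
  have h5 : ((M.updateCol i b).updateCol j (fun k => M k i)) =
      (M.updateCol j b).submatrix id (Equiv.swap i j) := by
    ext k a
    by_cases ha : a = j
    · subst ha; simp [hij]
    by_cases hb : a = i
    · subst hb; simp [Matrix.updateCol_ne ha]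
    · simp [Matrix.updateCol_ne ha, Matrix.updateCol_ne hb, Equiv.swap_apply_of_ne_of_ne hb ha]
  rw [h4, h5, Matrix.det_permute', Equiv.Perm.sign_swap hij] at h1
  simp at h1
  exact h1.symm

theorem hom_eval_smul {α : Type*} [Fintype α] {P : MvPolynomial α ℂ} {n : ℕ}
    (hP : P.IsHomogeneous n) (t : ℂ) (c : α → ℂ) :
    MvPolynomial.eval (t • c) P = t ^ n * MvPolynomial.eval c P := by
  rw [MvPolynomial.eval_eq', MvPolynomial.eval_eq', Finset.mul_sum]
  refine Finset.sum_congr rfl fun d hd => ?_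
  have h1 : ∑ i, d i = n := by
    have := hP (MvPolynomial.mem_support_iff.mp hd)
    rw [← this, Finsupp.weight_apply, Finsupp.sum_fintype] <;> simp
  simp only [Pi.smul_apply, smul_eq_mul, mul_pow, Finset.prod_mul_distrib, Finset.prod_pow_eq_pow_sum, h1]
  ring

theorem polarize {W : Type*} [AddCommGroup W] [Module ℂ W] {α : Type*} [Fintype α] [DecidableEq α]
    (φ : α → W →ₗ[ℂ] ℂ) (P : MvPolynomial α ℂ) (hP : P.IsHomogeneous 3) :
    ∃ T : W →ₗ[ℂ] W →ₗ[ℂ] W →ₗ[ℂ] ℂ,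
      (∀ x y z : W, T x y z = T y x z ∧ T x y z = T x z y) ∧
      ∀ v, T v v v = MvPolynomial.eval (fun a => φ a v) P := by
  have key : ∀ d ∈ P.support, ∃ T : W →ₗ[ℂ] W →ₗ[ℂ] W →ₗ[ℂ] ℂ,
      (∀ x y z : W, T x y z = T y x z ∧ T x y z = T x z y) ∧
      ∀ v, T v v v = ∏ i, φ i v ^ d i := by
    intro d hd
    have h1 : ∑ i, d i = 3 := by
      have := hP (MvPolynomial.mem_support_iff.mp hd)
      rw [← this, Finsupp.weight_apply, Finsupp.sum_fintype] <;> simp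
    have h2 : (Finsupp.toMultiset d).card = 3 := by
      rw [Finsupp.card_toMultiset, Finsupp.sum_fintype] <;> simp [h1]
    obtain ⟨i, j, k, hijk⟩ := Multiset.card_eq_three.mp h2
    have h3 : ∀ v, ∏ i, φ i v ^ d i = φ i v * φ j v * φ k v := by
      intro v
      have h4 : ((Finsupp.toMultiset d).map (fun i => φ i v)).prod = ∏ i, φ i v ^ d i := by
        rw [Finsupp.toMultiset_map, Finsupp.prod_toMultiset, Finsupp.prod_mapDomain_index,
          Finsupp.prod_fintype] <;> simp [pow_add]
      rw [← h4, hijk]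
      simp [mul_assoc]
    let S : (W →ₗ[ℂ] ℂ) → (W →ₗ[ℂ] ℂ) → (W →ₗ[ℂ] ℂ) → (W →ₗ[ℂ] W →ₗ[ℂ] W →ₗ[ℂ] ℂ) :=
      fun f g h => f.smulRight (g.smulRight h)
    refine ⟨(1 / 6 : ℂ) • (S (φ i) (φ j) (φ k) + S (φ i) (φ k) (φ j) + S (φ j) (φ i) (φ k)
      + S (φ j) (φ k) (φ i) + S (φ k) (φ i) (φ j) + S (φ k) (φ j) (φ i)), ?_, ?_⟩
    · intro x y z
      simp only [S, LinearMap.smul_apply, LinearMap.add_apply, LinearMap.smulRight_apply,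
        smul_eq_mul]
      constructor <;> ring
    · intro v
      rw [h3]
      simp only [S, LinearMap.smul_apply, LinearMap.add_apply, LinearMap.smulRight_apply,
        smul_eq_mul]
      ring
  choose! T hT1 hT2 using key
  refine ⟨∑ d ∈ P.support, P.coeff d • T d, ?_, ?_⟩
  · intro x y z
    simp only [LinearMap.sum_apply, LinearMap.smul_apply]
    exact ⟨Finset.sum_congr rfl fun d hd => by rw [(hT1 d hd x y z).1],
      Finset.sum_congr rfl fun d hd => by rw [(hT1 d hd x y z).2]⟩
  · intro v
    simp only [LinearMap.sum_apply, LinearMap.smul_apply]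
    rw [MvPolynomial.eval_eq']
    exact Finset.sum_congr rfl fun d hd => by rw [hT2 d hd, smul_eq_mul]

theorem adj_sq {R : Type*} [CommRing R] [IsDomain R] [IsIntegrallyClosed R] [CharZero R]
    {ι : Type} [Fintype ι] [DecidableEq ι] {n : ℕ} (e : Fin (n + 1) ≃ ι)
    (A : Matrix ι ι R) (hA : Aᵀ = -A) (j : ι) :
    ∃ p : R, p ^ 2 = A.adjugate j j := by
  set k := e.symm j
  have h1 : A.adjugate j j = (A.submatrix e e).adjugate k k := by
    rw [Matrix.adjugate_submatrix_equiv_self]; simp [k]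
  rw [h1, Matrix.adjugate_fin_succ_eq_det_submatrix, Even.neg_one_pow ⟨_, rfl⟩, one_mul]
  apply skew_det_sq_ring
  ext a b
  have := congrFun (congrFun hA (e (k.succAbove a))) (e (k.succAbove b))
  simpa using this

theorem cubic_exists (L : (Fin 1 ⊕ Fin 5 → ℂ) →ₗ[ℂ] Matrix (Fin 5 ⊕ Fin 4) (Fin 5 ⊕ Fin 4) ℂ)
    (hs : ∀ c, (L c)ᵀ = - L c)
    (hk : ∀ c, L c *ᵥ (Sum.elim (fun j => c (Sum.inr j)) (fun _ => 0)) = 0) :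
    ∃ P : MvPolynomial (Fin 1 ⊕ Fin 5) ℂ, P.IsHomogeneous 3 ∧
      ∀ c, ∀ j, (L c).adjugate (Sum.inl j) (Sum.inl j) = (c (Sum.inr j)) ^ 2 *
        (MvPolynomial.eval c P) ^ 2 := by
  let M : Matrix (Fin 5 ⊕ Fin 4) (Fin 5 ⊕ Fin 4) (MvPolynomial (Fin 1 ⊕ Fin 5) ℂ) := Matrix.of fun k l =>
    ∑ a, MvPolynomial.C (L (Pi.single a 1) k l) * MvPolynomial.X a
  have hM : ∀ c, (MvPolynomial.eval c).mapMatrix M = L c := by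
    intro c
    have hc : c = ∑ a, c a • (Pi.single a (1:ℂ) : Fin 1 ⊕ Fin 5 → ℂ) := by
      ext b; simp [Finset.sum_apply, Pi.single_apply]
    ext k l
    conv_rhs => rw [hc, map_sum]
    simp only [map_smul, RingHom.mapMatrix_apply, Matrix.map_apply, M, Matrix.of_apply, map_sum,
      map_mul, MvPolynomial.eval_C, MvPolynomial.eval_X, Matrix.sum_apply, Matrix.smul_apply,
      smul_eq_mul]
    exact Finset.sum_congr rfl fun _ _ => mul_comm _ _
  have hadj : ∀ c i j, MvPolynomial.eval c (M.adjugate i j) = (L c).adjugate i j := by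
    intro c i j
    rw [← hM c, ← RingHom.map_adjugate, RingHom.mapMatrix_apply, Matrix.map_apply]
  let x : Fin 5 ⊕ Fin 4 → MvPolynomial (Fin 1 ⊕ Fin 5) ℂ := Sum.elim (fun j => MvPolynomial.X (Sum.inr j)) (fun _ => 0)
  have hMs : Mᵀ = -M := by
    ext1 k l
    simp only [M, Matrix.transpose_apply, Matrix.of_apply, Matrix.neg_apply]
    rw [← Finset.sum_neg_distrib]
    refine Finset.sum_congr rfl fun a _ => ?_
    have := congrFun (congrFun (hs (Pi.single a 1)) k) l
    simp only [Matrix.transpose_apply, Matrix.neg_apply] at this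
    rw [this, map_neg, neg_mul]
  have hMx : M *ᵥ x = 0 := by
    ext1 k
    apply MvPolynomial.funext
    intro c
    have h1 := congrFun (hk c) k
    rw [← hM c] at h1
    rw [Pi.zero_apply, map_zero, ← Pi.zero_apply (M := fun _ => ℂ) k, ← h1]
    simp [Matrix.mulVec, dotProduct, x]
  have hsym : ∀ i j, M.adjugate i j = M.adjugate j i := by
    intro i j
    have h1 : M.adjugateᵀ = M.adjugate := by
      rw [Matrix.adjugate_transpose, hMs, ← neg_one_smul (MvPolynomial (Fin 1 ⊕ Fin 5) ℂ) M, Matrix.adjugate_smul]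
      simp [Even.neg_one_pow (show Even 8 by decide)]
    exact (congrFun (congrFun h1 i) j).symm
  have hprop : ∀ i j, x j ^ 2 * M.adjugate i i = x i ^ 2 * M.adjugate j j := by
    intro i j
    have h1 := adj_prop M x hMx i j i
    have h2 := adj_prop M x hMx i j j
    rw [hsym i j] at h2
    linear_combination x j * h1 + x i * h2
  let e : Fin (8 + 1) ≃ Fin 5 ⊕ Fin 4 := (finSumFinEquiv (m := 5) (n := 4)).symm
  obtain ⟨p, hp⟩ := adj_sq (n := 8) e M hMs (Sum.inl 0)
  have hd : (MvPolynomial.X (Sum.inr 0) : MvPolynomial (Fin 1 ⊕ Fin 5) ℂ) ∣ p := by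
    have h1 : (MvPolynomial.X (Sum.inr 0) : MvPolynomial (Fin 1 ⊕ Fin 5) ℂ) ∣ (MvPolynomial.X (Sum.inr 1) * p) ^ 2 := by
      have h2 := hprop (Sum.inl 0) (Sum.inl 1)
      rw [← hp] at h2
      simp only [x, Sum.elim_inl] at h2
      exact ⟨MvPolynomial.X (Sum.inr 0) * M.adjugate (Sum.inl 1) (Sum.inl 1),
        by linear_combination h2⟩
    have hpr : Prime (MvPolynomial.X (Sum.inr 0) : MvPolynomial (Fin 1 ⊕ Fin 5) ℂ) := MvPolynomial.X_prime
    rcases hpr.dvd_or_dvd (hpr.dvd_of_dvd_pow h1) with h | h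
    · exfalso
      rw [MvPolynomial.X_dvd_X] at h
      simp at h
    · exact h
  obtain ⟨C, rfl⟩ := hd
  have hC : ∀ j : Fin 5, M.adjugate (Sum.inl j) (Sum.inl j) =
      MvPolynomial.X (Sum.inr j) ^ 2 * C ^ 2 := by
    intro j
    have h2 := hprop (Sum.inl 0) (Sum.inl j)
    rw [← hp] at h2
    simp only [x, Sum.elim_inl] at h2
    have h0 : (MvPolynomial.X (Sum.inr 0) : MvPolynomial (Fin 1 ⊕ Fin 5) ℂ) ^ 2 ≠ 0 := pow_ne_zero _ (MvPolynomial.X_ne_zero _)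
    apply mul_left_cancel₀ h0
    rw [← h2]; ring
  refine ⟨MvPolynomial.homogeneousComponent 3 C, MvPolynomial.homogeneousComponent_isHomogeneous _ _,
    fun c j => ?_⟩
  rw [← hadj, hC]
  simp only [map_mul, map_pow, MvPolynomial.eval_X]
  by_cases hcj : c (Sum.inr j) = 0
  · simp [hcj]
  congr 1
  let q : Polynomial ℂ := ∑ d ∈ Finset.range (C.totalDegree + 1),
    Polynomial.C (MvPolynomial.eval c (MvPolynomial.homogeneousComponent d C)) * Polynomial.X ^ d
  have hq : ∀ t, q.eval t = MvPolynomial.eval (t • c) C := by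
    intro t
    conv_rhs => rw [← MvPolynomial.sum_homogeneousComponent C]
    simp only [q, Polynomial.eval_finsetSum, map_sum, Polynomial.eval_mul, Polynomial.eval_C,
      Polynomial.eval_pow, Polynomial.eval_X]
    refine Finset.sum_congr rfl fun d _ => ?_
    rw [hom_eval_smul (MvPolynomial.homogeneousComponent_isHomogeneous d C), mul_comm]
  have hq3 : q.coeff 3 = MvPolynomial.eval c (MvPolynomial.homogeneousComponent 3 C) := by
    simp only [q, Polynomial.finsetSum_coeff, Polynomial.coeff_C_mul_X_pow]
    rw [Finset.sum_ite_eq]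
    split_ifs with h
    · rfl
    · rw [MvPolynomial.homogeneousComponent_eq_zero, map_zero]
      simpa using h
  have hqq : q ^ 2 * Polynomial.X ^ 2 =
      (Polynomial.C (MvPolynomial.eval c C) * Polynomial.X ^ 3) ^ 2 * Polynomial.X ^ 2 := by
    apply Polynomial.funext
    intro t
    have h1 := hadj (t • c) (Sum.inl j) (Sum.inl j)
    rw [map_smul, Matrix.adjugate_smul, Matrix.smul_apply, ← hadj, hC] at h1
    simp only [map_mul, map_pow, MvPolynomial.eval_X, Pi.smul_apply, smul_eq_mul] at h1
    have h0 : c (Sum.inr j) ^ 2 ≠ 0 := pow_ne_zero _ hcj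
    apply mul_left_cancel₀ h0
    simp only [Polynomial.eval_mul, Polynomial.eval_pow, Polynomial.eval_C, Polynomial.eval_X, hq]
    simp at h1
    linear_combination h1
  have hqq2 := mul_right_cancel₀ (pow_ne_zero 2 Polynomial.X_ne_zero) hqq
  rw [← hq3]
  rcases sq_eq_sq_iff_eq_or_eq_neg.mp hqq2 with h | h <;> rw [h] <;> simp

theorem skew_rank_even {V : Type*} [AddCommGroup V] [Module ℂ V] [FiniteDimensional ℂ V]
    (β : V →ₗ[ℂ] V →ₗ[ℂ] ℂ) (hβ : ∀ x y, β x y = - β y x) :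
    Even (Module.finrank ℂ (LinearMap.range β)) := by
  by_contra hodd
  rw [Nat.not_even_iff_odd] at hodd
  obtain ⟨W, hW⟩ := Submodule.exists_isCompl (LinearMap.ker β)
  have h1 := Submodule.finrank_add_eq_of_isCompl hW
  have h2 := LinearMap.finrank_range_add_finrank_ker β
  have hr : Module.finrank ℂ W = Module.finrank ℂ (LinearMap.range β) := by omega
  rw [← hr] at hodd
  let b := Module.finBasis ℂ W
  let A : Matrix (Fin (Module.finrank ℂ W)) (Fin (Module.finrank ℂ W)) ℂ :=
    Matrix.of fun i j => β (b i) (b j)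
  have hA : Aᵀ = -A := by
    ext i j; simpa [A] using hβ (b j) (b i)
  have hdet : A.det = 0 := by
    have h3 : A.det = - A.det := by
      conv_lhs => rw [← Matrix.det_transpose, hA, Matrix.det_neg]
      rw [Fintype.card_fin, hodd.neg_one_pow]; ring
    exact self_eq_neg.mp h3
  obtain ⟨w, hw0, hw⟩ := Matrix.exists_mulVec_eq_zero_iff.mpr hdet
  let x : W := ∑ i, w i • b i
  have hx : ∀ i, β (x : V) (b i) = 0 := by
    intro i
    have h4 := congrFun hw i
    rw [hβ, neg_eq_zero]
    simp only [Matrix.mulVec, dotProduct, A, Matrix.of_apply, Pi.zero_apply] at h4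
    rw [← h4]
    simp [x, mul_comm]
  have hxW : ∀ y : W, β (x : V) y = 0 := by
    intro y
    have h5 : (y : V) = ∑ i, b.repr y i • (b i : V) := by
      conv_lhs => rw [← b.sum_repr y]
      rw [Submodule.coe_sum]
      rfl
    rw [h5, map_sum]
    exact Finset.sum_eq_zero fun i _ => by rw [map_smul, hx, smul_zero]
  have hxk : (x : V) ∈ LinearMap.ker β := by
    rw [LinearMap.mem_ker]
    ext y
    obtain ⟨k, hk, z, hz, rfl⟩ := Submodule.mem_sup.mp (hW.sup_eq_top ▸ Submodule.mem_top (x := y))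
    rw [map_add, hxW ⟨z, hz⟩, hβ, LinearMap.mem_ker.mp hk]
    simp
  have hx0 : x = 0 := by
    have := Submodule.disjoint_def.mp hW.disjoint _ hxk x.2
    exact_mod_cast this
  exact hw0 (funext fun i => Fintype.linearIndependent_iff.mp b.linearIndependent w hx0 i)

theorem rank_iff {V : Type*} [AddCommGroup V] [Module ℂ V] [FiniteDimensional ℂ V]
    (hV : Module.finrank ℂ V = 10) {ι : Type*} [Fintype ι] [DecidableEq ι]
    (b : Module.Basis (Fin 1 ⊕ ι) ℂ V)
    (β : V →ₗ[ℂ] V →ₗ[ℂ] ℂ) (hβ : ∀ x y, β x y = - β y x) (h1 : β (b (Sum.inl 0)) = 0)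
    (v : V) (hv : β v = 0) (j : ι) (hj : b.repr v (Sum.inr j) ≠ 0) :
    (Matrix.of fun k l => β (b (Sum.inr k)) (b (Sum.inr l))).adjugate j j = 0 ↔
      Module.finrank ℂ (LinearMap.range β) ≤ 6 := by
  set A : Matrix ι ι ℂ := Matrix.of fun k l => β (b (Sum.inr k)) (b (Sum.inr l)) with hA
  have h2 := LinearMap.finrank_range_add_finrank_ker β
  have hAw : ∀ w k, (A *ᵥ w) k = β (b (Sum.inr k)) (∑ l, w l • b (Sum.inr l)) := by
    intro w k
    simp [Matrix.mulVec, dotProduct, A, mul_comm]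
  have hsum : ∀ z, z = b.repr z (Sum.inl 0) • b (Sum.inl 0) +
      ∑ l, b.repr z (Sum.inr l) • b (Sum.inr l) := by
    intro z
    conv_lhs => rw [← b.sum_repr z]
    rw [Fintype.sum_sum_type, Fin.sum_univ_one]
  rw [Matrix.adjugate_apply]
  constructor
  · intro h
    obtain ⟨w, hw0, hw⟩ := Matrix.exists_mulVec_eq_zero_iff.mpr h
    have hwj : w j = 0 := by
      have := congrFun hw j
      simpa [Matrix.mulVec, Matrix.updateRow_self] using this
    have hwk : ∀ k, k ≠ j → (A *ᵥ w) k = 0 := by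
      intro k hk
      have := congrFun hw k
      simpa [Matrix.mulVec, Matrix.updateRow_ne hk] using this
    set z := ∑ l, w l • b (Sum.inr l) with hz
    have hzr : ∀ l, b.repr z (Sum.inr l) = w l := by
      intro l
      simp [z, Finsupp.single_apply]
    have hz0 : b.repr z (Sum.inl 0) = 0 := by
      simp [z]
    have hzu : ∀ k, k ≠ j → β z (b (Sum.inr k)) = 0 := by
      intro k hk
      rw [hβ, ← hAw, hwk k hk, neg_zero]
    have hz1 : β z (b (Sum.inl 0)) = 0 := by rw [hβ, h1]; simp
    have hzj : β z (b (Sum.inr j)) = 0 := by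
      have h3 : β z v = 0 := by rw [hβ, hv]; simp
      rw [hsum v, map_add, map_smul, hz1, map_sum, Finset.sum_eq_single j] at h3
      · simpa [hj] using h3
      · intro k _ hk
        rw [map_smul, hzu k hk, smul_zero]
      · simp
    have hzk : β z = 0 := by
      apply b.ext
      rintro (a | k)
      · rw [Subsingleton.elim a 0, hz1]; rfl
      · by_cases hk : k = j
        · rw [hk, hzj]; rfl
        · rw [hzu k hk]; rfl
    have hli : LinearIndependent ℂ ![b (Sum.inl 0), v, z] := by
      rw [Fintype.linearIndependent_iff]
      intro g hg
      simp only [Fin.sum_univ_three, Matrix.cons_val_zero, Matrix.cons_val_one,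
        Matrix.cons_val_two, Matrix.cons_val] at hg
      have g1 : g 1 = 0 := by
        have := congrArg (fun y => b.repr y (Sum.inr j)) hg
        simp [hzr, hwj, hj] at this
        exact this
      have g0 : g 0 = 0 := by
        have := congrArg (fun y => b.repr y (Sum.inl 0)) hg
        simp [hz0, g1] at this
        exact this
      have g2 : g 2 = 0 := by
        by_contra hg2
        apply hw0
        ext l
        have := congrArg (fun y => b.repr y (Sum.inr l)) hg
        simp [hzr, g1, g0, hg2] at this
        exact this
      intro i
      fin_cases i
      · exact g0
      · exact g1
      · exact g2
    have hle : Submodule.span ℂ (Set.range ![b (Sum.inl 0), v, z]) ≤ LinearMap.ker β := by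
      rw [Submodule.span_le]
      rintro _ ⟨i, rfl⟩
      fin_cases i <;> simp [h1, hv, hzk]
    have h5 := Submodule.finrank_mono hle
    rw [finrank_span_eq_card hli, Fintype.card_fin] at h5
    have h6 := skew_rank_even β hβ
    obtain ⟨r, hr⟩ := h6
    omega
  · intro h
    by_contra hdet
    let F : LinearMap.ker β →ₗ[ℂ] (Fin 2 → ℂ) :=
      (LinearMap.pi ![b.coord (Sum.inl 0), b.coord (Sum.inr j)]) ∘ₗ (LinearMap.ker β).subtype
    have hF : Function.Injective F := by
      rw [← LinearMap.ker_eq_bot, LinearMap.ker_eq_bot']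
      rintro ⟨z, hz⟩ hFz
      have e0 : b.repr z (Sum.inl 0) = 0 := by simpa [F] using congrFun hFz 0
      have e1 : b.repr z (Sum.inr j) = 0 := by simpa [F] using congrFun hFz 1
      have hzs := hsum z
      rw [e0, zero_smul, zero_add] at hzs
      have hw : (A.updateRow j (Pi.single j 1)) *ᵥ (fun l => b.repr z (Sum.inr l)) = 0 := by
        ext k
        by_cases hk : k = j
        · subst hk
          simp [Matrix.mulVec, Matrix.updateRow_self, e1]
        · have : (A *ᵥ (fun l => b.repr z (Sum.inr l))) k = 0 := by
            rw [hAw, ← hzs, hβ, LinearMap.mem_ker.mp hz]; simp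
          simpa [Matrix.mulVec, Matrix.updateRow_ne hk] using this
      have hw0 := Matrix.eq_zero_of_mulVec_eq_zero hdet hw
      ext
      change z = 0
      rw [hzs]
      exact Finset.sum_eq_zero fun l _ => by rw [congrFun hw0 l]; simp
    have h7 := LinearMap.finrank_le_finrank_of_injective hF
    simp at h7
    omega

theorem basis_exists {W : Type*} [AddCommGroup W] [Module ℂ W] [FiniteDimensional ℂ W]
    (n : ℕ) (hW : Module.finrank ℂ W = n + 1) (w : W) (hw : w ≠ 0) :
    ∃ b : Module.Basis (Fin 1 ⊕ Fin n) ℂ W, b (Sum.inl 0) = w := by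
  obtain ⟨Q, hQ⟩ := Submodule.exists_isCompl (Submodule.span ℂ {w})
  have h1 := Submodule.finrank_add_eq_of_isCompl hQ
  rw [finrank_span_singleton hw, hW] at h1
  let b1 : Module.Basis (Fin 1) ℂ (Submodule.span ℂ {w}) :=
    (Module.Basis.singleton (Fin 1) ℂ).map (LinearEquiv.toSpanNonzeroSingleton ℂ W w hw)
  let b2 : Module.Basis (Fin n) ℂ Q := Module.finBasisOfFinrankEq ℂ Q (by omega)
  refine ⟨(b1.prod b2).map (Submodule.prodEquivOfIsCompl _ _ hQ), ?_⟩
  simp [b1]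

theorem basis_ext {V : Type*} [AddCommGroup V] [Module ℂ V] [FiniteDimensional ℂ V]
    (hV : Module.finrank ℂ V = 10) (V₆ : Submodule ℂ V) (hV₆ : Module.finrank ℂ V₆ = 6)
    (b : Module.Basis (Fin 1 ⊕ Fin 5) ℂ V₆) :
    ∃ B : Module.Basis (Fin 1 ⊕ (Fin 5 ⊕ Fin 4)) ℂ V, B (Sum.inl 0) = b (Sum.inl 0) ∧
      ∀ j, B (Sum.inr (Sum.inl j)) = b (Sum.inr j) := by
  obtain ⟨Q, hQ⟩ := Submodule.exists_isCompl V₆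
  have h1 := Submodule.finrank_add_eq_of_isCompl hQ
  let b2 : Module.Basis (Fin 4) ℂ Q := Module.finBasisOfFinrankEq ℂ Q (by omega)
  refine ⟨((b.prod b2).map (Submodule.prodEquivOfIsCompl _ _ hQ)).reindex
    (Equiv.sumAssoc _ _ _), ?_, ?_⟩
  · simp
  · intro j; simp

/-- Lemma 3.4: if `σ(v₁, V₆, V₁₀) = 0`, then the locus of `v ∈ V₆` (away from
the line `ℂv₁`) where `σ(v, ·, ·)` has rank at most 6 is cut out by a single
homogeneous cubic, i.e. there is a symmetric trilinear form `T` on `V₆` with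
`T(v,v,v) = 0 ↔ rank σ(v,·,·) ≤ 6` for all `v ∈ V₆` outside `ℂv₁`. -/
theorem stmt_7 (V : Type*) [AddCommGroup V] [Module ℂ V] [FiniteDimensional ℂ V]
    (hV : Module.finrank ℂ V = 10)
    (σ : V →ₗ[ℂ] V →ₗ[ℂ] V →ₗ[ℂ] ℂ)
    (halt : ∀ x y z : V, (x = y ∨ y = z ∨ x = z) → σ x y z = 0)
    (v₁ : V) (hv₁ : v₁ ≠ 0)
    (V₆ : Submodule ℂ V) (hV₆ : Module.finrank ℂ V₆ = 6) (hv₁6 : v₁ ∈ V₆)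
    (hvan : ∀ y ∈ V₆, ∀ z : V, σ v₁ y z = 0) :
    ∃ T : V₆ →ₗ[ℂ] V₆ →ₗ[ℂ] V₆ →ₗ[ℂ] ℂ,
      (∀ x y z : V₆, T x y z = T y x z ∧ T x y z = T x z y) ∧
      ∀ v : V₆, (v : V) ∉ Submodule.span ℂ {v₁} →
        (T v v v = 0 ↔ Module.finrank ℂ (LinearMap.range (σ (v : V))) ≤ 6) := by
  have hs23 : ∀ x y z, σ x y z = - σ x z y := by
    intro x y z
    have h := halt x (y + z) (y + z) (Or.inr (Or.inl rfl))
    simp only [map_add, LinearMap.add_apply, halt x y y (Or.inr (Or.inl rfl)),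
      halt x z z (Or.inr (Or.inl rfl))] at h
    linear_combination h
  have hs12 : ∀ x y z, σ x y z = - σ y x z := by
    intro x y z
    have h := halt (x + y) (x + y) z (Or.inl rfl)
    simp only [map_add, LinearMap.add_apply, halt x x z (Or.inl rfl),
      halt y y z (Or.inl rfl)] at h
    linear_combination h
  obtain ⟨b, hb⟩ := basis_exists 5 hV₆ ⟨v₁, hv₁6⟩ (fun h => hv₁ (congrArg Subtype.val h))
  obtain ⟨B, hB0, hBj⟩ := basis_ext hV V₆ hV₆ b
  have hB1 : B (Sum.inl 0) = v₁ := by rw [hB0, hb]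
  let L : (Fin 1 ⊕ Fin 5 → ℂ) →ₗ[ℂ] Matrix (Fin 5 ⊕ Fin 4) (Fin 5 ⊕ Fin 4) ℂ :=
    { toFun := fun c => Matrix.of fun k l =>
        σ (b.equivFun.symm c : V₆) (B (Sum.inr k)) (B (Sum.inr l))
      map_add' := by
        intro c d; ext k l
        simp only [map_add, Submodule.coe_add, LinearMap.add_apply, Matrix.of_apply,
          Matrix.add_apply]
      map_smul' := by
        intro t c; ext k l
        simp only [map_smul, Submodule.coe_smul, LinearMap.smul_apply, Matrix.of_apply,
          Matrix.smul_apply, RingHom.id_apply] }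
  have hL : ∀ c k l, L c k l = σ (b.equivFun.symm c : V₆) (B (Sum.inr k)) (B (Sum.inr l)) :=
    fun _ _ _ => rfl
  have hdec : ∀ c, ((b.equivFun.symm c : V₆) : V) = c (Sum.inl 0) • v₁ +
      ∑ j, c (Sum.inr j) • B (Sum.inr (Sum.inl j)) := by
    intro c
    rw [Module.Basis.equivFun_symm_apply, Fintype.sum_sum_type, Fin.sum_univ_one, hb]
    simp [hBj]
  have hk1 : ∀ v ∈ V₆, σ v v₁ = 0 := by
    intro v hv; ext z
    rw [hs12, hvan v hv]; simp
  obtain ⟨P, hP, hPc⟩ := cubic_exists L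
    (by intro c; ext k l; simp only [Matrix.transpose_apply, Matrix.neg_apply, hL]; exact hs23 _ _ _)
    (by
      intro c
      ext k
      have h1 := halt (b.equivFun.symm c : V₆) (B (Sum.inr k)) (b.equivFun.symm c : V₆)
        (Or.inr (Or.inr rfl))
      have h2 : σ (b.equivFun.symm c : V₆) (B (Sum.inr k)) v₁ = 0 := by
        rw [hs23, hk1 _ (Subtype.mem _)]; simp
      have h3 := congrArg (σ (b.equivFun.symm c : V₆) (B (Sum.inr k))) (hdec c)
      rw [h1, map_add, map_smul, h2, map_sum] at h3
      simp only [Matrix.mulVec, dotProduct, Fintype.sum_sum_type, Sum.elim_inl, Sum.elim_inr, hL,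
        mul_zero, Finset.sum_const_zero, add_zero, Pi.zero_apply]
      rw [smul_zero, zero_add] at h3
      rw [h3]
      exact Finset.sum_congr rfl fun j _ => by rw [map_smul, smul_eq_mul, mul_comm])
  obtain ⟨T, hT1, hT2⟩ := polarize (fun a => b.coord a) P hP
  refine ⟨T, hT1, fun v hv => ?_⟩
  set c := b.equivFun v with hc
  have hvc : b.equivFun.symm c = v := by simp [c]
  have hdv := hdec c
  rw [hvc] at hdv
  obtain ⟨j, hj⟩ : ∃ j, c (Sum.inr j) ≠ 0 := by
    by_contra! h
    apply hv
    rw [hdv]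
    simp only [h, zero_smul, Finset.sum_const_zero, add_zero]
    exact Submodule.smul_mem _ _ (Submodule.mem_span_singleton_self _)
  have hrepr : B.repr v (Sum.inr (Sum.inl j)) = c (Sum.inr j) := by
    rw [hdv, ← hB1]
    simp [Finsupp.single_apply]
  have hr := rank_iff hV B (σ v) (hs23 v) (by rw [hB1]; exact hk1 v v.2) v
    (by ext z; simpa using halt v v z (Or.inl rfl)) (Sum.inl j) (by rw [hrepr]; exact hj)
  have hLc : L c = Matrix.of fun k l => σ v (B (Sum.inr k)) (B (Sum.inr l)) := by
    ext k l; rw [hL, hvc]; rfl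
  rw [← hLc, hPc] at hr
  rw [← hr, hT2]
  have hce : (fun a => b.coord a v) = c := by ext a; simp [c]
  rw [hce]
  simp [hj]
end

section
/- Let V₁₀ be a 10-dimensional complex vector space, σ an alternating trilinear form on V₁₀, v₁ a nonzero vector, and V₆ ⊆ V₁₀ a 6-dimensional subspace with σ(v₁, y, z) = 0 for all y ∈ V₆, z ∈ V₁₀, and such that {z ∈ V₁₀ : σ(v₁, y, z) = 0 for all y ∈ V₁₀} = V₆. Let U₇ be a 7-dimensional subspace with V₆ ⊆ U₇ ⊆ V₁₀, set U₇^⊥ := {w ∈ V₁₀ : σ(v₁, u, w) = 0 for all u ∈ U₇}, and let l₀ ∈ U₇ \ V₆. Then the rank of the alternating bilinear form σ(l₀, ·, ·) on V₁₀ is at most 6 if and only if the rank of the restriction of σ(l₀, ·, ·) to the subspace U₇^⊥ is at most 4. -/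
theorem aux_rank {V : Type*} [AddCommGroup V] [Module ℂ V] [FiniteDimensional ℂ V]
    (ω : V →ₗ[ℂ] V →ₗ[ℂ] ℂ) (ha : ∀ x, ω x x = 0) (v w : V) (hw : ω v w ≠ 0)
    (P : Submodule ℂ V) (hP : ∀ x, x ∈ P ↔ ω v x = 0) :
    Module.finrank ℂ (LinearMap.range ω) =
      Module.finrank ℂ (LinearMap.range (ω.compl₁₂ P.subtype P.subtype)) + 2 := by
  have hsk : ∀ x y, ω x y = - ω y x := by
    intro x y
    have h := ha (x + y)
    simp only [map_add, LinearMap.add_apply, ha] at h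
    linear_combination h
  have hvP : v ∈ P := (hP v).2 (ha v)
  have hPk : P = LinearMap.ker (ω v) := by
    ext x; rw [hP, LinearMap.mem_ker]
  have h1 := LinearMap.finrank_range_add_finrank_ker ω
  have h2 := LinearMap.finrank_range_add_finrank_ker (ω.compl₁₂ P.subtype P.subtype)
  have h3 := LinearMap.finrank_range_add_finrank_ker (ω v)
  have h4 : Module.finrank ℂ (LinearMap.range (ω v)) = 1 := by
    have : LinearMap.range (ω v) = ⊤ := by
      rw [LinearMap.range_eq_top]
      intro c
      exact ⟨(c / ω v w) • w, by simp [hw]⟩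
    rw [this]; simp
  rw [← hPk, h4] at h3
  have h5 : (LinearMap.ker (ω.compl₁₂ P.subtype P.subtype)).map P.subtype
      = LinearMap.ker ω ⊔ Submodule.span ℂ {v} := by
    apply le_antisymm
    · rintro _ ⟨p, hp, rfl⟩
      have hp' : ∀ z ∈ P, ω p z = 0 := fun z hz => by
        have := LinearMap.congr_fun (LinearMap.mem_ker.1 hp) ⟨z, hz⟩
        simpa using this
      have : (p : V) = (p - (ω p w / ω v w) • v) + (ω p w / ω v w) • v := by abel
      rw [Submodule.subtype_apply, this]
      refine Submodule.add_mem_sup ?_ (Submodule.smul_mem _ _ (Submodule.mem_span_singleton_self v))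
      rw [LinearMap.mem_ker]
      ext z
      have := hp' (z - (ω v z / ω v w) • w) ((hP _).2 (by simp [hw]))
      simp only [map_sub, map_smul, smul_eq_mul, LinearMap.sub_apply, LinearMap.smul_apply,
        LinearMap.zero_apply] at this ⊢
      linear_combination this
    · refine sup_le ?_ ?_
      · intro x hx
        rw [LinearMap.mem_ker] at hx
        refine ⟨⟨x, (hP x).2 (by rw [hsk, hx]; simp)⟩, ?_, rfl⟩
        refine LinearMap.mem_ker.2 ?_
        ext z
        simp [hx]
      · rw [Submodule.span_singleton_le_iff_mem]
        refine ⟨⟨v, hvP⟩, ?_, rfl⟩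
        refine LinearMap.mem_ker.2 ?_
        ext z
        simpa using (hP z).1 z.2
  have h6 : LinearMap.ker ω ⊓ Submodule.span ℂ {v} = ⊥ := by
    rw [Submodule.eq_bot_iff]
    rintro x ⟨hx, hx2⟩
    obtain ⟨c, rfl⟩ := Submodule.mem_span_singleton.1 hx2
    have := LinearMap.congr_fun (LinearMap.mem_ker.1 hx) w
    simp [hw] at this
    simp [this]
  have hv : v ≠ 0 := by rintro rfl; simp at hw
  have h7 := Submodule.finrank_sup_add_finrank_inf_eq (LinearMap.ker ω) (Submodule.span ℂ {v})
  rw [h6, finrank_span_singleton hv, ← h5, finrank_bot, Submodule.finrank_map_subtype_eq] at h7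
  omega

/-- Lemma 3.8: with `σ(v₁, V₆, V₁₀) = 0`, kernel of `σ(v₁,·,·)` equal to `V₆`,
a 7-dimensional `U₇` with `V₆ ⊆ U₇`, `P = U₇^⊥` the perpendicular of `U₇` with
respect to `σ(v₁,·,·)`, and `l₀ ∈ U₇ \ V₆`: the form `σ(l₀,·,·)` has rank at
most 6 on `V₁₀` if and only if its restriction to `P` has rank at most 4. -/
theorem stmt_9 (V : Type*) [AddCommGroup V] [Module ℂ V] [FiniteDimensional ℂ V]
    (hV : Module.finrank ℂ V = 10)
    (σ : V →ₗ[ℂ] V →ₗ[ℂ] V →ₗ[ℂ] ℂ)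
    (halt : ∀ x y z : V, (x = y ∨ y = z ∨ x = z) → σ x y z = 0)
    (v₁ : V) (hv₁ : v₁ ≠ 0)
    (V₆ : Submodule ℂ V) (hV₆ : Module.finrank ℂ V₆ = 6) (hv₁6 : v₁ ∈ V₆)
    (hvan : ∀ y ∈ V₆, ∀ z : V, σ v₁ y z = 0)
    (hker : ∀ z : V, (∀ y : V, σ v₁ y z = 0) ↔ z ∈ V₆)
    (U₇ : Submodule ℂ V) (hU₇ : Module.finrank ℂ U₇ = 7) (h67 : V₆ ≤ U₇)
    (P : Submodule ℂ V) (hP : ∀ w : V, w ∈ P ↔ ∀ u ∈ U₇, σ v₁ u w = 0)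
    (l₀ : V) (hl₀ : l₀ ∈ U₇) (hl₀' : l₀ ∉ V₆) :
    Module.finrank ℂ (LinearMap.range (σ l₀)) ≤ 6 ↔
      Module.finrank ℂ (LinearMap.range ((σ l₀).compl₁₂ P.subtype P.subtype)) ≤ 4 := by
  obtain ⟨w, hw⟩ : ∃ w, σ l₀ v₁ w ≠ 0 := by
    by_contra! h
    apply hl₀'
    rw [← hker]
    intro y
    have e1 := halt (l₀ + y) (l₀ + y) v₁ (Or.inl rfl)
    have e2 := halt (l₀ + v₁) y (l₀ + v₁) (Or.inr (Or.inr rfl))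
    have e3 := halt l₀ (y + v₁) (y + v₁) (Or.inr (Or.inl rfl))
    have e4 := h y
    simp only [map_add, LinearMap.add_apply, halt _ _ _ (Or.inl rfl),
      halt _ _ _ (Or.inr (Or.inl rfl)), halt _ _ _ (Or.inr (Or.inr rfl))] at e2 e3
    linear_combination e2 - e3 + e4
  have hsw : ∀ z, σ v₁ l₀ z = - σ l₀ v₁ z := by
    intro z
    have e := halt (l₀ + v₁) (l₀ + v₁) z (Or.inl rfl)
    simp only [map_add, LinearMap.add_apply, halt _ _ _ (Or.inl rfl)] at e
    linear_combination e
  have hU : U₇ = V₆ ⊔ Submodule.span ℂ {l₀} := by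
    symm
    apply Submodule.eq_of_le_of_finrank_le
    · exact sup_le h67 ((Submodule.span_singleton_le_iff_mem _ _).2 hl₀)
    · have : V₆ < V₆ ⊔ Submodule.span ℂ {l₀} := by
        refine lt_of_le_of_ne le_sup_left fun h => hl₀' ?_
        rw [h]
        exact Submodule.mem_sup_right (Submodule.mem_span_singleton_self _)
      have := Submodule.finrank_lt_finrank_of_lt this
      omega
  have := aux_rank (σ l₀) (fun x => halt _ _ _ (Or.inr (Or.inl rfl))) v₁ w hw P (by
    intro x
    rw [hP]
    constructor
    · intro h
      have := h l₀ hl₀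
      rw [hsw] at this
      simpa using this
    · intro h u hu
      rw [hU] at hu
      obtain ⟨a, ha, b, hb, rfl⟩ := Submodule.mem_sup.1 hu
      obtain ⟨c, rfl⟩ := Submodule.mem_span_singleton.1 hb
      simp [hvan a ha, hsw, h])
  omega
end

section
/- Let V₁₀ be a 10-dimensional complex vector space, σ an alternating trilinear form on V₁₀, v₁ a nonzero vector, and V₆ ⊆ V₁₀ a 6-dimensional subspace with σ(v₁, y, z) = 0 for all y ∈ V₆, z ∈ V₁₀, and such that {z ∈ V₁₀ : σ(v₁, y, z) = 0 for all y ∈ V₁₀} = V₆. Assume in addition that every w ∈ V₁₀ for which the alternating bilinear form σ(w, ·, ·) has rank at most 4 lies in ℂv₁. Let U₇ be a 7-dimensional subspace with V₆ ⊆ U₇ ⊆ V₁₀, set U₇^⊥ := {w ∈ V₁₀ : σ(v₁, u, w) = 0 for all u ∈ U₇}, and let l₀ ∈ U₇ \ V₆ be such that σ(l₀, ·, ·) has rank at most 6. Then the restriction of σ(l₀, ·, ·) to U₇^⊥ has rank exactly 4. -/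
theorem aux_red {V : Type*} [AddCommGroup V] [Module ℂ V] [FiniteDimensional ℂ V]
    (B : V →ₗ[ℂ] V →ₗ[ℂ] ℂ) (hB : ∀ x, B x x = 0) (v : V) (hv : B v ≠ 0)
    (P : Submodule ℂ V) (hP : ∀ w, w ∈ P ↔ B v w = 0) :
    Module.finrank ℂ (LinearMap.range (B.compl₁₂ P.subtype P.subtype)) + 2 =
      Module.finrank ℂ (LinearMap.range B) := by
  have hskew : ∀ x y, B x y = - B y x := by
    intro x y
    have h := hB (x + y)
    simp only [map_add, LinearMap.add_apply, hB] at h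
    linear_combination h
  have hPk : P = LinearMap.ker (B v) := by
    ext w; rw [hP, LinearMap.mem_ker]
  have hPd : Module.finrank ℂ P + 1 = Module.finrank ℂ V := by
    have h1 := LinearMap.finrank_range_add_finrank_ker (B v)
    have h2 : LinearMap.range (B v) = ⊤ := LinearMap.range_eq_top.2 (LinearMap.surjective hv)
    rw [h2, finrank_top, Module.finrank_self, ← hPk] at h1
    omega
  have hvk : v ∉ LinearMap.ker B := hv
  have hmap : (LinearMap.ker (B.compl₁₂ P.subtype P.subtype)).map P.subtype =
      LinearMap.ker B ⊔ Submodule.span ℂ {v} := by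
    obtain ⟨u, hu⟩ : ∃ u, B v u ≠ 0 := by
      by_contra! h
      exact hv (LinearMap.ext h)
    ext w
    rw [Submodule.mem_sup]
    constructor
    · rintro ⟨⟨w, hw⟩, hk, rfl⟩
      have hk' : ∀ z, B v z = 0 → B w z = 0 := by
        intro z hz
        have := LinearMap.congr_fun (LinearMap.mem_ker.1 hk) ⟨z, (hP z).2 hz⟩
        simpa using this
      let c := B w u / B v u
      refine ⟨w - c • v, ?_, c • v, Submodule.smul_mem _ _ (Submodule.mem_span_singleton_self v), by simp⟩
      rw [LinearMap.mem_ker]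
      ext z
      have h := hk' (z - (B v z / B v u) • u) (by simp [hu])
      simp only [map_sub, map_smul, smul_eq_mul, LinearMap.sub_apply, LinearMap.smul_apply,
        LinearMap.zero_apply, c] at h ⊢
      rw [← h]; ring
    · rintro ⟨a, ha, b, hb, rfl⟩
      obtain ⟨c, rfl⟩ := Submodule.mem_span_singleton.1 hb
      have ha' : B a = 0 := ha
      have hm : a + c • v ∈ P := by
        rw [hP, map_add, map_smul, hB, hskew, ha']; simp
      refine ⟨⟨_, hm⟩, ?_, rfl⟩
      rw [SetLike.mem_coe, LinearMap.mem_ker]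
      ext ⟨z, hz⟩
      have := (hP z).1 hz
      simp [ha', this]
  have hsup : Module.finrank ℂ ↥(LinearMap.ker B ⊔ Submodule.span ℂ {v}) =
      Module.finrank ℂ (LinearMap.ker B) + 1 := by
    have h := Submodule.finrank_sup_add_finrank_inf_eq (LinearMap.ker B) (Submodule.span ℂ {v})
    have hv0 : v ≠ 0 := by rintro rfl; simp at hv
    have hd : LinearMap.ker B ⊓ Submodule.span ℂ {v} = ⊥ :=
      ((Submodule.disjoint_span_singleton' hv0).2 hvk).eq_bot
    rw [hd, finrank_bot, finrank_span_singleton hv0] at h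
    simpa using h
  have h1 := LinearMap.finrank_range_add_finrank_ker B
  have h2 := LinearMap.finrank_range_add_finrank_ker (B.compl₁₂ P.subtype P.subtype)
  have h3 := LinearEquiv.finrank_eq (Submodule.equivMapOfInjective P.subtype P.injective_subtype
    (LinearMap.ker (B.compl₁₂ P.subtype P.subtype)))
  rw [hmap, hsup] at h3
  omega

theorem aux_even (n : ℕ) : ∀ {V : Type*} [AddCommGroup V] [Module ℂ V] [FiniteDimensional ℂ V]
    (B : V →ₗ[ℂ] V →ₗ[ℂ] ℂ) (_ : ∀ x, B x x = 0)
    (_ : Module.finrank ℂ (LinearMap.range B) = n), Even n := by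
  induction n using Nat.strong_induction_on with
  | _ n ih =>
    intro V _ _ _ B hB hn
    by_cases h0 : B = 0
    · subst h0
      rw [LinearMap.range_zero, finrank_bot] at hn
      simp [← hn]
    · obtain ⟨v, hv⟩ : ∃ v, B v ≠ 0 := by
        by_contra! h
        exact h0 (LinearMap.ext h)
      have h := aux_red B hB v hv (LinearMap.ker (B v)) (fun w => LinearMap.mem_ker)
      have h2 := ih _ (by omega) (B.compl₁₂ (LinearMap.ker (B v)).subtype
        (LinearMap.ker (B v)).subtype) (fun x => by simp [hB]) rfl
      rw [← hn, ← h]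
      exact h2.add even_two


/-- End of the proof of Lemma 3.8: in the setting of Lemma 3.8, assuming
moreover that `ℂv₁` is the only line where `σ(w,·,·)` has rank at most 4, if
`l₀ ∈ U₇ \ V₆` satisfies `rank σ(l₀,·,·) ≤ 6`, then the restriction of
`σ(l₀,·,·)` to `U₇^⊥` has rank exactly 4. -/
theorem stmt_10 (V : Type*) [AddCommGroup V] [Module ℂ V] [FiniteDimensional ℂ V]
    (hV : Module.finrank ℂ V = 10)
    (σ : V →ₗ[ℂ] V →ₗ[ℂ] V →ₗ[ℂ] ℂ)
    (halt : ∀ x y z : V, (x = y ∨ y = z ∨ x = z) → σ x y z = 0)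
    (v₁ : V) (hv₁ : v₁ ≠ 0)
    (V₆ : Submodule ℂ V) (hV₆ : Module.finrank ℂ V₆ = 6) (hv₁6 : v₁ ∈ V₆)
    (hvan : ∀ y ∈ V₆, ∀ z : V, σ v₁ y z = 0)
    (hker : ∀ z : V, (∀ y : V, σ v₁ y z = 0) ↔ z ∈ V₆)
    (hrk4 : ∀ w : V, Module.finrank ℂ (LinearMap.range (σ w)) ≤ 4 →
      w ∈ Submodule.span ℂ {v₁})
    (U₇ : Submodule ℂ V) (hU₇ : Module.finrank ℂ U₇ = 7) (h67 : V₆ ≤ U₇)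
    (P : Submodule ℂ V) (hP : ∀ w : V, w ∈ P ↔ ∀ u ∈ U₇, σ v₁ u w = 0)
    (l₀ : V) (hl₀ : l₀ ∈ U₇) (hl₀' : l₀ ∉ V₆)
    (hl₀6 : Module.finrank ℂ (LinearMap.range (σ l₀)) ≤ 6) :
    Module.finrank ℂ (LinearMap.range ((σ l₀).compl₁₂ P.subtype P.subtype)) = 4 := by
  have hs : ∀ x y z, σ x y z = - σ y x z := by
    intro x y z
    have h := halt (x + y) (x + y) z (Or.inl rfl)
    simp only [map_add, LinearMap.add_apply, halt x x z (Or.inl rfl),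
      halt y y z (Or.inl rfl)] at h
    linear_combination h
  have hs' : ∀ x y z, σ x y z = - σ x z y := by
    intro x y z
    have h := halt x (y + z) (y + z) (Or.inr (Or.inl rfl))
    simp only [map_add, LinearMap.add_apply, halt x y y (Or.inr (Or.inl rfl)),
      halt x z z (Or.inr (Or.inl rfl))] at h
    linear_combination h
  have hB : ∀ x, σ l₀ x x = 0 := fun x => halt _ _ _ (Or.inr (Or.inl rfl))
  have hv : σ l₀ v₁ ≠ 0 := by
    intro h
    apply hl₀'
    rw [← hker]
    intro y
    rw [hs', hs, h]; simp
  have hU : V₆ ⊔ Submodule.span ℂ {l₀} = U₇ := by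
    apply Submodule.eq_of_le_of_finrank_le
    · exact sup_le h67 ((Submodule.span_singleton_le_iff_mem _ _).2 hl₀)
    · have hlt : V₆ < V₆ ⊔ Submodule.span ℂ {l₀} :=
        lt_of_le_of_ne le_sup_left (fun h => hl₀' (h ▸
          (le_sup_right : _ ≤ V₆ ⊔ Submodule.span ℂ {l₀}) (Submodule.mem_span_singleton_self l₀)))
      have := Submodule.finrank_lt_finrank_of_lt hlt
      omega
  have hP' : ∀ w, w ∈ P ↔ σ l₀ v₁ w = 0 := by
    intro w
    rw [hP]
    constructor
    · intro h
      rw [hs, h _ hl₀, neg_zero]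
    · intro h u hu
      rw [← hU, Submodule.mem_sup] at hu
      obtain ⟨a, ha, b, hb, rfl⟩ := hu
      obtain ⟨c, rfl⟩ := Submodule.mem_span_singleton.1 hb
      have h' : σ v₁ l₀ w = 0 := by rw [hs, h, neg_zero]
      simp [hvan a ha w, h']
  have h1 := aux_red (σ l₀) hB v₁ hv P hP'
  obtain ⟨k, hk⟩ := aux_even _ (σ l₀) hB rfl
  have h2 : ¬ Module.finrank ℂ (LinearMap.range (σ l₀)) ≤ 4 := by
    intro h
    exact hl₀' ((Submodule.span_singleton_le_iff_mem _ _).2 hv₁6 (hrk4 _ h))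
  omega
end

section
/- Let A be a 7-dimensional complex vector space and A₂ ⊆ A a 2-dimensional subspace, and let q : Λ²A → Λ²(A/A₂) be the map induced by the quotient A → A/A₂. Let b ∈ Λ²A be such that: (i) b = e₁ ∧ e₂ + e₃ ∧ e₄ for some linearly independent vectors e₁, e₂, e₃, e₄ ∈ A (i.e. b has rank four), and (ii) q(b) = w₁ ∧ w₂ for some linearly independent w₁, w₂ ∈ A/A₂ (i.e. b has rank two modulo A₂). Then there exist a, a′ ∈ A₂, vectors x, u, v ∈ A, and y ∈ A₂ + span{u, v} such that b = a ∧ x + a′ ∧ y + u ∧ v. -/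
open ExteriorAlgebra

theorem aux_prod_ne_zero {V : Type*} [AddCommGroup V] [Module ℂ V] (f : Fin 4 → V)
    (hf : LinearIndependent ℂ f) : ExteriorAlgebra.ιMulti ℂ 4 f ≠ 0 := by
  intro h0
  obtain ⟨g, hg⟩ := LinearMap.exists_leftInverse_of_injective
    (Fintype.linearCombination ℂ f) (by
      rw [LinearMap.ker_eq_bot]
      exact hf.fintypeLinearCombination_injective)
  have hgi : ∀ i, g (f i) = Pi.single i 1 := by
    intro i
    have := LinearMap.congr_fun hg (Pi.single i 1)
    simpa [Fintype.linearCombination_apply_single] using this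
  let φ : V [⋀^Fin 4]→ₗ[ℂ] ℂ := (Matrix.detRowAlternating (n := Fin 4) (R := ℂ)).compLinearMap g
  let F : ∀ i, V [⋀^Fin i]→ₗ[ℂ] ℂ := Function.update (fun _ => 0) 4 φ
  have h1 := liftAlternating_apply_ιMulti F f
  rw [h0, map_zero] at h1
  have hF : F 4 = φ := by simp [F]
  rw [hF] at h1
  have h2 : φ f = 1 := by
    change Matrix.det (fun i => g (f i)) = 1
    have : (fun i => g (f i)) = (1 : Matrix (Fin 4) (Fin 4) ℂ) := by
      funext i j
      rw [hgi]
      simp [Matrix.one_apply, Pi.single_apply, eq_comm]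
    rw [this, Matrix.det_one]
  rw [h2] at h1
  exact zero_ne_one h1

theorem aux_anti {V : Type*} [AddCommGroup V] [Module ℂ V] (x y : V) :
    ι ℂ x * ι ℂ y = - (ι ℂ y * ι ℂ x) :=
  eq_neg_of_add_eq_zero_left (ι_add_mul_swap x y)

theorem aux_sq {V : Type*} [AddCommGroup V] [Module ℂ V] (x y z w : V) :
    (ι ℂ x * ι ℂ y) * (ι ℂ z * ι ℂ w) = (ι ℂ z * ι ℂ w) * (ι ℂ x * ι ℂ y) := by
  have e : ∀ p q : V, ∀ t : ExteriorAlgebra ℂ V,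
      ι ℂ p * (ι ℂ q * t) = - (ι ℂ q * (ι ℂ p * t)) := by
    intro p q t
    rw [← mul_assoc, aux_anti, neg_mul, mul_assoc]
  rw [mul_assoc, mul_assoc, e y z, aux_anti y w, mul_neg, mul_neg, mul_neg, neg_neg, e x z, e x w,
    mul_neg, neg_neg]

theorem aux_sq0 {V : Type*} [AddCommGroup V] [Module ℂ V] (x y : V) :
    (ι ℂ x * ι ℂ y) * (ι ℂ x * ι ℂ y) = 0 := by
  nth_rewrite 1 [aux_anti x y]
  rw [neg_mul, mul_assoc, ← mul_assoc (ι ℂ x), ι_sq_zero]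
  simp

theorem aux_norm {V : Type*} [AddCommGroup V] [Module ℂ V] (e₁ e₂ e₃ e₄ : V)
    (c₁ c₂ c₃ c₄ : ℂ) (h : c₁ ≠ 0) : ∃ x u v : V,
    ι ℂ e₁ * ι ℂ e₂ + ι ℂ e₃ * ι ℂ e₄ =
      ι ℂ (c₁ • e₁ + c₂ • e₂ + c₃ • e₃ + c₄ • e₄) * ι ℂ x + ι ℂ u * ι ℂ v := by
  refine ⟨c₁⁻¹ • e₂, e₃ + (c₄ * c₁⁻¹) • e₂, e₄ - (c₃ * c₁⁻¹) • e₂, ?_⟩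
  simp only [map_add, map_sub, map_smul, add_mul, mul_add, mul_sub, smul_mul_assoc,
    mul_smul_comm, ι_sq_zero, smul_zero, aux_anti e₄ e₂, smul_neg, smul_smul]
  simp only [smul_add, smul_smul, inv_mul_cancel₀ h, one_smul, smul_neg]
  module

/-- Normal form in Lemma 3.14: if `b ∈ Λ²A₇` has rank four
(`b = e₁ ∧ e₂ + e₃ ∧ e₄` with `e₁, e₂, e₃, e₄` linearly independent) and its
image under `q : Λ²A → Λ²(A/A₂)` has rank two (`q(b) = w₁ ∧ w₂` with `w₁, w₂`
linearly independent), then `b = a ∧ x + a' ∧ y + u ∧ v` with `a, a' ∈ A₂` and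
`y ∈ A₂ + span{u, v}`. -/
theorem stmt_12 (A : Type*) [AddCommGroup A] [Module ℂ A] [FiniteDimensional ℂ A]
    (hA : Module.finrank ℂ A = 7)
    (A₂ : Submodule ℂ A) (hA₂ : Module.finrank ℂ A₂ = 2)
    (b : ExteriorAlgebra ℂ A) (hb : b ∈ ⋀[ℂ]^2 A)
    (e₁ e₂ e₃ e₄ : A) (he : LinearIndependent ℂ ![e₁, e₂, e₃, e₄])
    (hb4 : b = ι ℂ e₁ * ι ℂ e₂ + ι ℂ e₃ * ι ℂ e₄)
    (w₁ w₂ : A ⧸ A₂) (hw : LinearIndependent ℂ ![w₁, w₂])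
    (hq : ExteriorAlgebra.map A₂.mkQ b = ι ℂ w₁ * ι ℂ w₂) :
    ∃ a a' x u v y : A, a ∈ A₂ ∧ a' ∈ A₂ ∧
      y ∈ A₂ ⊔ Submodule.span ℂ {u, v} ∧
      b = ι ℂ a * ι ℂ x + ι ℂ a' * ι ℂ y + ι ℂ u * ι ℂ v := by
  suffices H : ∃ a x u v : A, a ∈ A₂ ∧ b = ι ℂ a * ι ℂ x + ι ℂ u * ι ℂ v by
    obtain ⟨a, x, u, v, ha, h⟩ := H
    exact ⟨a, 0, x, u, v, 0, ha, zero_mem _, zero_mem _, by simpa using h⟩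
  have hdep : ¬ LinearIndependent ℂ (fun i => A₂.mkQ (![e₁, e₂, e₃, e₄] i)) := by
    intro hli
    apply aux_prod_ne_zero _ hli
    rw [hb4] at hq
    simp only [map_add, map_mul, ExteriorAlgebra.map_apply_ι] at hq
    have h2 := aux_sq0 w₁ w₂
    rw [← hq, add_mul, mul_add, mul_add, aux_sq0, aux_sq0,
      aux_sq (A₂.mkQ e₃), zero_add, add_zero, ← two_smul ℂ] at h2
    have h3 := (smul_eq_zero.1 h2).resolve_left two_ne_zero
    rw [ιMulti_apply]
    simpa [List.ofFn_succ, mul_assoc] using h3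
  rw [Fintype.not_linearIndependent_iff] at hdep
  obtain ⟨c, hc, i, hi⟩ := hdep
  have hmem : c 0 • e₁ + c 1 • e₂ + c 2 • e₃ + c 3 • e₄ ∈ A₂ := by
    rw [← Submodule.Quotient.mk_eq_zero]
    simpa [Fin.sum_univ_four] using hc
  rw [hb4]
  fin_cases i
  · obtain ⟨x, u, v, h⟩ := aux_norm e₁ e₂ e₃ e₄ (c 0) (c 1) (c 2) (c 3) hi
    exact ⟨_, x, u, v, hmem, h⟩
  · obtain ⟨x, u, v, h⟩ := aux_norm e₂ (-e₁) e₃ e₄ (c 1) (-c 0) (c 2) (c 3) hi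
    refine ⟨_, x, u, v, ?_, Eq.trans ?_ h⟩
    rotate_left
    · rw [aux_anti e₁ e₂, map_neg, mul_neg]
    · convert hmem using 1
      module
  · obtain ⟨x, u, v, h⟩ := aux_norm e₃ e₄ e₁ e₂ (c 2) (c 3) (c 0) (c 1) hi
    refine ⟨_, x, u, v, ?_, Eq.trans ?_ h⟩
    rotate_left
    · rw [add_comm]
    · convert hmem using 1
      module
  · obtain ⟨x, u, v, h⟩ := aux_norm e₄ (-e₃) e₁ e₂ (c 3) (-c 2) (c 0) (c 1) hi
    refine ⟨_, x, u, v, ?_, Eq.trans ?_ h⟩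
    rotate_left
    · rw [aux_anti e₃ e₄, map_neg, mul_neg, add_comm]
    · convert hmem using 1
      module
end
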